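/- In U the elements p₀ and p₁ q-commute with each other and with each of the generators u₀, u₁, u₂, u₃; more precisely: p₀p₁ = q⁻⁴p₁p₀, p₀u₀ = q²u₀p₀, p₀u₁ = u₁p₀, p₀u₂ = q⁻²u₂p₀, p₀u₃ = q⁻⁴u₃p₀, p₁u₀ = q⁴u₀p₁, p₁u₁ = q²u₁p₁, p₁u₂ = u₂p₁, and p₁u₃ = q⁻²u₃p₁. -/

import Mathlib

noncomputable section

abbrev F : Type := RatFunc ℚ

/-- The deformation parameter `q`. -/
def qq : F := RatFunc.X

/-- The quantum integer `[3] = q² + 1 + q⁻²`. -/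
def box3 : F := qq ^ 2 + 1 + (qq⁻¹) ^ 2

/-- The generators `E₁, E₂` of the free algebra. -/
def gen (i : Fin 2) : FreeAlgebra F (Fin 2) := FreeAlgebra.ι F i

/-- The quantized Serre relations. -/
inductive SerreRel : FreeAlgebra F (Fin 2) → FreeAlgebra F (Fin 2) → Prop
  | rel1 : SerreRel
      (gen 0 ^ 3 * gen 1 - box3 • (gen 0 ^ 2 * gen 1 * gen 0)
        + box3 • (gen 0 * gen 1 * gen 0 ^ 2) - gen 1 * gen 0 ^ 3) 0
  | rel2 : SerreRel
      (gen 1 ^ 3 * gen 0 - box3 • (gen 1 ^ 2 * gen 0 * gen 1)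
        + box3 • (gen 1 * gen 0 * gen 1 ^ 2) - gen 0 * gen 1 ^ 3) 0

/-- `U = U_q(𝔫)`, the free algebra on `E₁, E₂` modulo the quantized Serre relations. -/
abbrev U : Type := RingQuot SerreRel

def E1 : U := RingQuot.mkAlgHom F SerreRel (gen 0)
def E2 : U := RingQuot.mkAlgHom F SerreRel (gen 1)

/-- `A = (1/(q+q⁻¹))(E₂E₁ − q⁻²E₁E₂)`. -/
def Aelt : U := (qq + qq⁻¹)⁻¹ • (E2 * E1 - (qq⁻¹) ^ 2 • (E1 * E2))

def v0 : U := E1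
def v1 : U := Aelt * v0 - v0 * Aelt
def v2 : U := Aelt * v1 - v1 * Aelt
def v3 : U := Aelt * v2 - v2 * Aelt

/-- `uᵢ = (1 − q⁻²)⁻²ⁱ vᵢ`. -/
def u0 : U := v0
def u1 : U := ((1 - (qq⁻¹) ^ 2)⁻¹) ^ 2 • v1
def u2 : U := ((1 - (qq⁻¹) ^ 2)⁻¹) ^ 4 • v2
def u3 : U := ((1 - (qq⁻¹) ^ 2)⁻¹) ^ 6 • v3

/-- `p₁ = u₃u₁ − q²u₂²`. -/
def p1 : U := u3 * u1 - qq ^ 2 • u2 ^ 2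
/-- `p₀ = u₂u₀ − q²u₁²`. -/
def p0 : U := u2 * u0 - qq ^ 2 • u1 ^ 2

section Aux

set_option linter.unusedSimpArgs false

variable {K : Type*} [Field K] {R : Type*} [Ring R] [Algebra K R]

/-- `[D, ·]` relation in degree two implies that the next ones hold. -/
lemma aux_step (Q : K) (hQ : Q ≠ 0) (h2 : (2 : K) ≠ 0) (hm : Q + Q⁻¹ ≠ 0)
    (B C a b c d : R) (hb : b = B * a - a * B) (hc : c = B * b - b * B)
    (hd : d = B * c - c * B)
    (hCa : C * a - a * C = (Q + Q⁻¹) • c) (hCb : C * b - b * C = (Q + Q⁻¹) • d)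
    (h : b * a = Q • (a * b)) :
    c * a - Q • (a * c) = (Q - 1) • (b * b) ∧ c * b = Q • (b * c) := by
  have hBa : B * a = b + a * B := by rw [hb]; abel
  have hBb : B * b = c + b * B := by rw [hc]; abel
  have hBc : B * c = d + c * B := by rw [hd]; abel
  have hD : ∀ z w z' w' : R, B * z = z' + z * B → B * w = w' + w * B →
      B * (z * w) - (z * w) * B = z' * w + z * w' := by
    intro z w z' w' h1 h2
    rw [← mul_assoc, h1, add_mul, mul_assoc z B w, h2, mul_add, mul_assoc]; abel
  have e1 : c * a - Q • (a * c) = (Q - 1) • (b * b) := by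
    have h1 := hD b a c b hBb hBa
    have h2 := hD a b b c hBa hBb
    rw [h, mul_smul_comm, smul_mul_assoc, ← smul_sub, h2] at h1
    linear_combination (norm := module) -h1
  refine ⟨e1, ?_⟩
  have e2 : d * a + c * b - Q • (b * c + a * d) = (Q - 1) • (c * b + b * c) := by
    have h1 := hD c a d b hBc hBa
    have h2 := hD a c b d hBa hBc
    have h3 := hD b b c c hBb hBb
    have e := congrArg (fun z => B * z - z * B) e1
    simp only [mul_sub, sub_mul, mul_smul_comm, smul_mul_assoc] at e
    rw [← h1, ← h2, ← h3]
    linear_combination (norm := module) e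
  have e3 : d * a + b * c = Q • (c * b + a * d) := by
    have hCa' : C * a = (Q + Q⁻¹) • c + a * C := by rw [← hCa]; abel
    have hCb' : C * b = (Q + Q⁻¹) • d + b * C := by rw [← hCb]; abel
    have f1 : C * (b * a) - (b * a) * C = (Q + Q⁻¹) • (d * a + b * c) := by
      rw [← mul_assoc, hCb', add_mul, mul_assoc b C a, hCa', mul_add, mul_assoc, smul_add,
        mul_smul_comm, smul_mul_assoc]; abel
    have f2 : C * (a * b) - (a * b) * C = (Q + Q⁻¹) • (c * b + a * d) := by
      rw [← mul_assoc, hCa', add_mul, mul_assoc a C b, hCb', mul_add, mul_assoc, smul_add,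
        mul_smul_comm, smul_mul_assoc]; abel
    rw [h, mul_smul_comm, smul_mul_assoc, ← smul_sub, f2, smul_comm] at f1
    exact (smul_right_injective R hm f1).symm
  have e4 : (2 : K) • (c * b) = (2 : K) • (Q • (b * c)) := by
    linear_combination (norm := module) e2 - e3
  exact smul_right_injective R h2 e4

lemma aux_C (Q : K) (hQ : Q ≠ 0) (h3 : Q + 1 + Q⁻¹ ≠ 0)
    (x y B a b w : R) (hB : B = y * x - Q⁻¹ • (x * y)) (ha : a = B * x - x * B)
    (hb : b = B * a - a * B) (hw : w = y * B - B * y)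
    (h1 : a * x = Q • (x * a)) (h2 : y * w = Q • (w * y)) :
    ∃ C : R, C * B = B * C ∧ C * x - x * C = (Q + Q⁻¹) • b := by
  have hyx : y * x = B + Q⁻¹ • (x * y) := by rw [hB]; abel
  have hBx : B * x = a + x * B := by rw [ha]; abel
  have hBa : B * a = b + a * B := by rw [hb]; abel
  have hyB : y * B = w + B * y := by rw [hw]; abel
  -- the two expressions of A2
  have hA : y * a - Q⁻¹ • (a * y) = w * x - Q⁻¹ • (x * w) := by
    have : B * (y * x - Q⁻¹ • (x * y)) = (y * x - Q⁻¹ • (x * y)) * B := by rw [← hB]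
    rw [ha, hw]
    simp only [mul_sub, sub_mul, mul_smul_comm, smul_mul_assoc, mul_assoc, smul_sub] at this ⊢
    linear_combination (norm := module) this
  set A2 := y * a - Q⁻¹ • (a * y) with hA2
  have g1 : A2 * x - x * A2 = Q • (B * a) - Q⁻¹ • (a * B) := by
    have t1 : y * a * x = B * a * Q • 1 + x * y * a := by
      rw [mul_assoc, h1, mul_smul_comm, ← mul_assoc, hyx]
      simp only [add_mul, smul_add, smul_mul_assoc, mul_smul_comm, smul_smul, mul_one,
        mul_inv_cancel₀ hQ, one_smul]
    have t2 : a * y * x = a * B + x * a * y := by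
      rw [mul_assoc, hyx, mul_add, mul_smul_comm, ← mul_assoc, h1]
      simp only [smul_mul_assoc, smul_smul, inv_mul_cancel₀ hQ, one_smul]
    rw [hA2, sub_mul, smul_mul_assoc, t1, t2]
    simp only [mul_sub, mul_smul_comm, mul_assoc, mul_one]
    module
  have g2 : y * A2 - A2 * y = Q • (w * B) - Q⁻¹ • (B * w) := by
    have t1 : y * w * x = Q • (w * B) + w * x * y := by
      rw [h2, smul_mul_assoc, mul_assoc, hyx]
      simp only [mul_add, smul_add, mul_smul_comm, smul_smul,
        mul_inv_cancel₀ hQ, one_smul, mul_assoc]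
    have t2 : y * x * w = B * w + x * w * y := by
      rw [hyx, add_mul, smul_mul_assoc, mul_assoc x y w, h2]
      simp only [mul_smul_comm, smul_smul, inv_mul_cancel₀ hQ, one_smul, mul_assoc]
    rw [hA, mul_sub, mul_smul_comm, ← mul_assoc, ← mul_assoc, t1, t2]
    simp only [sub_mul, smul_mul_assoc]
    module
  have g3 : A2 * B = B * A2 := by
    have k1 : y * B * a - w * B * x = B * (y * a) - (w * x) * B := by
      rw [hyB, mul_assoc w B x, hBx]; simp only [mul_add, add_mul, mul_assoc]; abel
    have k2 : a * B * y - x * B * w = (a * y) * B - B * (x * w) := by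
      have : B * (x * w) = a * w + x * B * w := by rw [← mul_assoc, hBx, add_mul]
      rw [this, mul_assoc a y B, hyB]; simp only [mul_add, mul_assoc]; abel
    have e1 : A2 * B - B * A2 = (A2 * y - y * A2) * x + y * (A2 * x - x * A2)
        - Q⁻¹ • ((A2 * x - x * A2) * y) - Q⁻¹ • (x * (A2 * y - y * A2)) := by
      rw [hB]; simp only [mul_sub, sub_mul, mul_smul_comm, smul_mul_assoc, mul_assoc, smul_sub]
      module
    have g2' : A2 * y - y * A2 = -(Q • (w * B) - Q⁻¹ • (B * w)) := by rw [← g2]; abel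
    rw [g1, g2'] at e1
    have hB1 : B * A2 = B * (y * a) - Q⁻¹ • (B * (a * y)) := by
      rw [hA2, mul_sub, mul_smul_comm]
    have hB2 : A2 * B = y * a * B - Q⁻¹ • (a * y * B) := by
      rw [hA2, sub_mul, smul_mul_assoc]
    have hB3 : B * A2 = B * (w * x) - Q⁻¹ • (B * (x * w)) := by
      rw [hA, mul_sub, mul_smul_comm]
    have hB4 : A2 * B = w * x * B - Q⁻¹ • (x * w * B) := by
      rw [hA, sub_mul, smul_mul_assoc]
    have key : (Q + 1 + Q⁻¹) • (A2 * B - B * A2) = 0 := by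
      simp only [mul_sub, sub_mul, mul_smul_comm, smul_mul_assoc, mul_assoc, smul_sub, neg_mul,
        mul_neg, smul_neg, smul_smul] at e1 k1 k2 hB1 hB2 hB3 hB4 ⊢
      linear_combination (norm := skip) e1 + Q • k1 + (Q⁻¹ * Q⁻¹) • k2 - Q • hB1
        + Q⁻¹ • hB2 - Q⁻¹ • hB3 + Q • hB4
      try (match_scalars <;> field_simp <;> try ring)
    exact sub_eq_zero.1 ((smul_eq_zero.1 key).resolve_left h3)
  refine ⟨(2 : K) • A2 - (Q - Q⁻¹) • (B * B), ?_, ?_⟩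
  · simp only [mul_sub, sub_mul, mul_smul_comm, smul_mul_assoc, mul_assoc, g3]
  · have t : B * B * x - x * (B * B) = B * a + a * B := by
      rw [ha]; simp only [mul_sub, sub_mul, mul_assoc]; abel
    have e : ((2 : K) • A2 - (Q - Q⁻¹) • (B * B)) * x - x * ((2 : K) • A2 - (Q - Q⁻¹) • (B * B))
        = (2 : K) • (A2 * x - x * A2) - (Q - Q⁻¹) • (B * B * x - x * (B * B)) := by
      simp only [mul_sub, sub_mul, mul_smul_comm, smul_mul_assoc, smul_sub]; abel
    rw [e, g1, t, hBa]
    module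

lemma aux_next (m : K) (B C a b c d : R) (hCB : C * B = B * C) (hb : b = B * a - a * B)
    (hd : d = B * c - c * B) (h : C * a - a * C = m • c) : C * b - b * C = m • d := by
  have : C * b - b * C = B * (C * a - a * C) - (C * a - a * C) * B := by
    rw [hb]
    have e1 : C * (B * a) = B * (C * a) := by rw [← mul_assoc, hCB, mul_assoc]
    have e2 : a * (C * B) = a * (B * C) := by rw [hCB]
    simp only [mul_sub, sub_mul, mul_assoc, e1, e2]; abel
  rw [this, h, hd, mul_smul_comm, smul_mul_assoc, smul_sub]

/-- The six quadratic relations. -/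
lemma aux_rels (Q : K) (hQ : Q ≠ 0) (h2 : (2 : K) ≠ 0) (hm : Q + Q⁻¹ ≠ 0)
    (h3 : Q + 1 + Q⁻¹ ≠ 0) (x y : R)
    (s1 : x ^ 3 * y - (Q + 1 + Q⁻¹) • (x ^ 2 * y * x) + (Q + 1 + Q⁻¹) • (x * y * x ^ 2)
      - y * x ^ 3 = 0)
    (s2 : y ^ 3 * x - (Q + 1 + Q⁻¹) • (y ^ 2 * x * y) + (Q + 1 + Q⁻¹) • (y * x * y ^ 2)
      - x * y ^ 3 = 0)
    (B a b c : R) (hB : B = y * x - Q⁻¹ • (x * y)) (ha : a = B * x - x * B)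
    (hb : b = B * a - a * B) (hc : c = B * b - b * B) :
    a * x = Q • (x * a) ∧ b * a = Q • (a * b) ∧ c * b = Q • (b * c) ∧
    b * x - Q • (x * b) = (Q - 1) • (a * a) ∧ c * a - Q • (a * c) = (Q - 1) • (b * b) ∧
    c * x - Q • (x * c) = (Q ^ 2 - 1) • (a * b) := by
  have r1 : a * x = Q • (x * a) := by
    rw [ha, hB]
    simp only [pow_succ, pow_zero, one_mul, mul_sub, sub_mul, mul_smul_comm, smul_mul_assoc,
      mul_assoc, smul_sub] at s1 ⊢
    linear_combination (norm := skip) -s1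
    try (match_scalars <;> field_simp <;> try ring)
  have r2 : y * (y * B - B * y) = Q • ((y * B - B * y) * y) := by
    rw [hB]
    simp only [pow_succ, pow_zero, one_mul, mul_sub, sub_mul, mul_smul_comm, smul_mul_assoc,
      mul_assoc, smul_sub] at s2 ⊢
    linear_combination (norm := skip) s2
    try (match_scalars <;> field_simp <;> try ring)
  obtain ⟨C, hCB, hCx⟩ := aux_C Q hQ h3 x y B a b _ hB ha hb rfl r1 r2
  have hCa := aux_next _ B C x a b c hCB ha hc hCx
  have hCb := aux_next _ B C a b c _ hCB hb rfl hCa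
  obtain ⟨e1, e2⟩ := aux_step Q hQ h2 hm B C x a b c ha hb hc hCx hCa r1
  obtain ⟨e3, e4⟩ := aux_step Q hQ h2 hm B C a b c _ hb hc rfl hCa hCb e2
  refine ⟨r1, e2, e4, e1, e3, ?_⟩
  have hBx : B * x = a + x * B := by rw [ha]; abel
  have hBa : B * a = b + a * B := by rw [hb]; abel
  have hBb : B * b = c + b * B := by rw [hc]; abel
  have hD : ∀ z w z' w' : R, B * z = z' + z * B → B * w = w' + w * B →
      B * (z * w) - (z * w) * B = z' * w + z * w' := by
    intro z w z' w' h1 h2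
    rw [← mul_assoc, h1, add_mul, mul_assoc z B w, h2, mul_add, mul_assoc]; abel
  have k1 := hD b x c a hBb hBx
  have k2 := hD x b a c hBx hBb
  have k3 := hD a a b b hBa hBa
  have e := congrArg (fun z => B * z - z * B) e1
  simp only [mul_sub, sub_mul, mul_smul_comm, smul_mul_assoc] at e
  linear_combination (norm := module) e - k1 + Q • k2 + (Q - 1) • k3 + (Q - 2) • e2

lemma aux_final (Q : K) (hQ : Q ≠ 0) (u0 u1 u2 u3 : R)
    (h10 : u1 * u0 = Q • (u0 * u1)) (h21 : u2 * u1 = Q • (u1 * u2))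
    (h32 : u3 * u2 = Q • (u2 * u3))
    (h20 : u2 * u0 - Q • (u0 * u2) = (Q - 1) • (u1 * u1))
    (h31 : u3 * u1 - Q • (u1 * u3) = (Q - 1) • (u2 * u2))
    (h30 : u3 * u0 - Q • (u0 * u3) = (Q ^ 2 - 1) • (u1 * u2))
    (p0 p1 : R) (hp0 : p0 = u2 * u0 - Q • u1 ^ 2) (hp1 : p1 = u3 * u1 - Q • u2 ^ 2) :
    p0 * p1 = (Q ^ 2)⁻¹ • (p1 * p0) ∧
    p0 * u0 = Q • (u0 * p0) ∧
    p0 * u1 = u1 * p0 ∧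
    p0 * u2 = Q⁻¹ • (u2 * p0) ∧
    p0 * u3 = (Q ^ 2)⁻¹ • (u3 * p0) ∧
    p1 * u0 = Q ^ 2 • (u0 * p1) ∧
    p1 * u1 = Q • (u1 * p1) ∧
    p1 * u2 = u2 * p1 ∧
    p1 * u3 = Q⁻¹ • (u3 * p1) := by
  rw [sub_eq_iff_eq_add] at h20 h31 h30
  have t10 : ∀ z, u1 * (u0 * z) = Q • (u0 * (u1 * z)) := fun z => by
    rw [← mul_assoc, h10, smul_mul_assoc, mul_assoc]
  have t21 : ∀ z, u2 * (u1 * z) = Q • (u1 * (u2 * z)) := fun z => by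
    rw [← mul_assoc, h21, smul_mul_assoc, mul_assoc]
  have t32 : ∀ z, u3 * (u2 * z) = Q • (u2 * (u3 * z)) := fun z => by
    rw [← mul_assoc, h32, smul_mul_assoc, mul_assoc]
  have t20 : ∀ z, u2 * (u0 * z) = (Q - 1) • (u1 * (u1 * z)) + Q • (u0 * (u2 * z)) := fun z => by
    rw [← mul_assoc, h20]; simp only [add_mul, smul_mul_assoc, mul_assoc]
  have t31 : ∀ z, u3 * (u1 * z) = (Q - 1) • (u2 * (u2 * z)) + Q • (u1 * (u3 * z)) := fun z => by
    rw [← mul_assoc, h31]; simp only [add_mul, smul_mul_assoc, mul_assoc]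
  have t30 : ∀ z, u3 * (u0 * z) = (Q ^ 2 - 1) • (u1 * (u2 * z)) + Q • (u0 * (u3 * z)) :=
    fun z => by
    rw [← mul_assoc, h30]; simp only [add_mul, smul_mul_assoc, mul_assoc]
  have a0 : p0 * u0 = Q • (u0 * p0) := by
    rw [hp0]
    simp only [pow_two, mul_add, add_mul, mul_sub, sub_mul, mul_smul_comm, smul_mul_assoc,
      mul_assoc, t10, t21, t32, t20, t31, t30, h10, h21, h32, h20, h31, h30]
    try (match_scalars <;> field_simp <;> try ring)
  have a1 : p0 * u1 = u1 * p0 := by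
    rw [hp0]
    simp only [pow_two, mul_add, add_mul, mul_sub, sub_mul, mul_smul_comm, smul_mul_assoc,
      mul_assoc, t10, t21, t32, t20, t31, t30, h10, h21, h32, h20, h31, h30]
    try (match_scalars <;> field_simp <;> try ring)
  have a2 : p0 * u2 = Q⁻¹ • (u2 * p0) := by
    rw [hp0]
    simp only [pow_two, mul_add, add_mul, mul_sub, sub_mul, mul_smul_comm, smul_mul_assoc,
      mul_assoc, t10, t21, t32, t20, t31, t30, h10, h21, h32, h20, h31, h30]
    try (match_scalars <;> field_simp <;> try ring)
  have a3 : p0 * u3 = (Q ^ 2)⁻¹ • (u3 * p0) := by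
    rw [hp0]
    simp only [pow_two, mul_add, add_mul, mul_sub, sub_mul, mul_smul_comm, smul_mul_assoc,
      mul_assoc, t10, t21, t32, t20, t31, t30, h10, h21, h32, h20, h31, h30]
    try (match_scalars <;> field_simp <;> try ring)
  refine ⟨?_, a0, a1, a2, a3, ?_, ?_, ?_, ?_⟩
  · have b1 : p0 * (u3 * u1) = (Q ^ 2)⁻¹ • (u3 * u1 * p0) := by
      rw [← mul_assoc, a3, smul_mul_assoc, mul_assoc, a1, mul_assoc]
    have b2 : p0 * (u2 * u2) = (Q ^ 2)⁻¹ • (u2 * u2 * p0) := by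
      rw [← mul_assoc, a2, smul_mul_assoc, mul_assoc, a2, mul_smul_comm, smul_smul, mul_assoc,
        pow_two, mul_inv]
    rw [hp1, pow_two, mul_sub, sub_mul, mul_smul_comm, smul_mul_assoc, b1, b2]
    module
  all_goals
    rw [hp1]
    simp only [pow_two, mul_add, add_mul, mul_sub, sub_mul, mul_smul_comm, smul_mul_assoc,
      mul_assoc, t10, t21, t32, t20, t31, t30, h10, h21, h32, h20, h31, h30]
    try (match_scalars <;> field_simp <;> try ring)

lemma aux_main (Q t s : K) (hQ : Q ≠ 0) (h2 : (2 : K) ≠ 0) (hm : Q + Q⁻¹ ≠ 0)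
    (h3 : Q + 1 + Q⁻¹ ≠ 0) (x y : R)
    (s1 : x ^ 3 * y - (Q + 1 + Q⁻¹) • (x ^ 2 * y * x) + (Q + 1 + Q⁻¹) • (x * y * x ^ 2)
      - y * x ^ 3 = 0)
    (s2 : y ^ 3 * x - (Q + 1 + Q⁻¹) • (y ^ 2 * x * y) + (Q + 1 + Q⁻¹) • (y * x * y ^ 2)
      - x * y ^ 3 = 0)
    (A v1 v2 v3 u1 u2 u3 : R) (hA : A = t • (y * x - Q⁻¹ • (x * y))) (hv1 : v1 = A * x - x * A)
    (hv2 : v2 = A * v1 - v1 * A) (hv3 : v3 = A * v2 - v2 * A)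
    (hu1 : u1 = s ^ 2 • v1) (hu2 : u2 = s ^ 4 • v2) (hu3 : u3 = s ^ 6 • v3)
    (p0 p1 : R) (hp0 : p0 = u2 * x - Q • u1 ^ 2) (hp1 : p1 = u3 * u1 - Q • u2 ^ 2) :
    p0 * p1 = (Q ^ 2)⁻¹ • (p1 * p0) ∧
    p0 * x = Q • (x * p0) ∧
    p0 * u1 = u1 * p0 ∧
    p0 * u2 = Q⁻¹ • (u2 * p0) ∧
    p0 * u3 = (Q ^ 2)⁻¹ • (u3 * p0) ∧
    p1 * x = Q ^ 2 • (x * p1) ∧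
    p1 * u1 = Q • (u1 * p1) ∧
    p1 * u2 = u2 * p1 ∧
    p1 * u3 = Q⁻¹ • (u3 * p1) := by
  obtain ⟨B, hB⟩ : ∃ B, B = y * x - Q⁻¹ • (x * y) := ⟨_, rfl⟩
  obtain ⟨a, ha⟩ : ∃ a, a = B * x - x * B := ⟨_, rfl⟩
  obtain ⟨b, hb⟩ : ∃ b, b = B * a - a * B := ⟨_, rfl⟩
  obtain ⟨c, hc⟩ : ∃ c, c = B * b - b * B := ⟨_, rfl⟩
  obtain ⟨r1, r2, r3, r4, r5, r6⟩ := aux_rels Q hQ h2 hm h3 x y s1 s2 B a b c hB ha hb hc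
  rw [← hB] at hA
  have w1 : v1 = t • a := by
    rw [hv1, hA, ha]; simp only [smul_mul_assoc, mul_smul_comm, smul_sub]
  have w2 : v2 = t ^ 2 • b := by
    rw [hv2, w1, hA, hb]; simp only [smul_mul_assoc, mul_smul_comm, smul_sub]; module
  have w3 : v3 = t ^ 3 • c := by
    rw [hv3, w2, hA, hc]; simp only [smul_mul_assoc, mul_smul_comm, smul_sub]; module
  rw [w1] at hu1
  rw [w2] at hu2
  rw [w3] at hu3
  refine aux_final Q hQ x u1 u2 u3 ?_ ?_ ?_ ?_ ?_ ?_ p0 p1 hp0 hp1 <;>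
    simp only [hu1, hu2, hu3, smul_mul_assoc, mul_smul_comm]
  · linear_combination (norm := module) (s ^ 2 * t) • r1
  · linear_combination (norm := module) (s ^ 6 * t ^ 3) • r2
  · linear_combination (norm := module) (s ^ 10 * t ^ 5) • r3
  · linear_combination (norm := module) (s ^ 4 * t ^ 2) • r4
  · linear_combination (norm := module) (s ^ 8 * t ^ 4) • r5
  · linear_combination (norm := module) (s ^ 6 * t ^ 3) • r6

end Aux

lemma aux_qq_ne : qq ≠ 0 := RatFunc.X_ne_zero

lemma aux_poly_ne (p : Polynomial ℚ) (hp : p.eval 1 ≠ 0) :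
    algebraMap (Polynomial ℚ) F p ≠ 0 := by
  intro h
  have : p = 0 := by
    apply RatFunc.algebraMap_injective ℚ
    rw [h, map_zero]
  exact hp (by rw [this, Polynomial.eval_zero])

lemma aux_m_ne : qq ^ 2 + (qq ^ 2)⁻¹ ≠ 0 := by
  have h := aux_poly_ne (Polynomial.X ^ 4 + 1) (by norm_num)
  simp only [map_add, map_pow, map_one, RatFunc.algebraMap_X] at h
  have hq := aux_qq_ne
  intro h0
  apply h
  have : qq ^ 4 + 1 = qq ^ 2 * (qq ^ 2 + (qq ^ 2)⁻¹) := by field_simp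
  change qq ^ 4 + 1 = 0
  rw [this, h0, mul_zero]

lemma aux_b_ne : qq ^ 2 + 1 + (qq ^ 2)⁻¹ ≠ 0 := by
  have h := aux_poly_ne (Polynomial.X ^ 4 + Polynomial.X ^ 2 + 1) (by norm_num)
  simp only [map_add, map_pow, map_one, RatFunc.algebraMap_X] at h
  have hq := aux_qq_ne
  intro h0
  apply h
  have : qq ^ 4 + qq ^ 2 + 1 = qq ^ 2 * (qq ^ 2 + 1 + (qq ^ 2)⁻¹) := by field_simp
  change qq ^ 4 + qq ^ 2 + 1 = 0
  rw [this, h0, mul_zero]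

lemma aux_two_ne : (2 : F) ≠ 0 := by
  have h := aux_poly_ne 2 (by norm_num)
  simpa using h

lemma aux_serre1 : E1 ^ 3 * E2 - (qq ^ 2 + 1 + (qq ^ 2)⁻¹) • (E1 ^ 2 * E2 * E1)
    + (qq ^ 2 + 1 + (qq ^ 2)⁻¹) • (E1 * E2 * E1 ^ 2) - E2 * E1 ^ 3 = 0 := by
  have h := RingQuot.mkAlgHom_rel F SerreRel.rel1
  simp only [map_add, map_sub, map_smul, map_mul, map_pow, map_zero, box3, inv_pow] at h
  exact h

lemma aux_serre2 : E2 ^ 3 * E1 - (qq ^ 2 + 1 + (qq ^ 2)⁻¹) • (E2 ^ 2 * E1 * E2)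
    + (qq ^ 2 + 1 + (qq ^ 2)⁻¹) • (E2 * E1 * E2 ^ 2) - E1 * E2 ^ 3 = 0 := by
  have h := RingQuot.mkAlgHom_rel F SerreRel.rel2
  simp only [map_add, map_sub, map_smul, map_mul, map_pow, map_zero, box3, inv_pow] at h
  exact h

/-- In `U` the elements `p₀` and `p₁` q-commute with each other and with each of the
generators `u₀, u₁, u₂, u₃`. -/
theorem stmt5 :
    p0 * p1 = qq ^ (-4 : ℤ) • (p1 * p0) ∧
    p0 * u0 = qq ^ 2 • (u0 * p0) ∧
    p0 * u1 = u1 * p0 ∧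
    p0 * u2 = qq ^ (-2 : ℤ) • (u2 * p0) ∧
    p0 * u3 = qq ^ (-4 : ℤ) • (u3 * p0) ∧
    p1 * u0 = qq ^ 4 • (u0 * p1) ∧
    p1 * u1 = qq ^ 2 • (u1 * p1) ∧
    p1 * u2 = u2 * p1 ∧
    p1 * u3 = qq ^ (-2 : ℤ) • (u3 * p1) := by
  have H := aux_main (qq ^ 2) (qq + qq⁻¹)⁻¹ ((1 - (qq⁻¹) ^ 2)⁻¹) (pow_ne_zero 2 aux_qq_ne) aux_two_ne
    aux_m_ne aux_b_ne E1 E2 aux_serre1 aux_serre2 Aelt v1 v2 v3 u1 u2 u3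
    (by rw [Aelt, inv_pow]) rfl rfl rfl rfl rfl rfl p0 p1 rfl rfl
  have z4 : qq ^ (-4 : ℤ) = ((qq ^ 2) ^ 2)⁻¹ := by
    rw [← pow_mul, zpow_neg]; rfl
  have z2 : qq ^ (-2 : ℤ) = (qq ^ 2)⁻¹ := by
    rw [zpow_neg]; rfl
  have z : qq ^ 4 = (qq ^ 2) ^ 2 := by rw [← pow_mul]
  rw [z4, z2, z]
  exact H
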